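/- There exists a constant C > 0 such that for every integer k ≥ 3 there is a positive integer t with t ≤ C · k^3 having the following property: for every positive integer n, every equinumerous t-coloring of [t·n] contains a rainbow arithmetic progression of length k. (Equivalently, T_k = O(k^3).) -/

import Mathlib

/-- `c` is an equinumerous `t`-coloring of `[t*n] = {1, ..., t*n}`:
each color class `c⁻¹(i)` for `i ∈ {1, ..., t}` has exactly `n` elements. -/
def EquinumerousColoring (t n : ℕ) (c : ℕ → ℕ) : Prop :=
  ∀ i, 1 ≤ i → i ≤ t → ((Finset.Icc 1 (t * n)).filter (fun x => c x = i)).card = n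

/-- The arithmetic progression with first term `a`, common difference `d` and
length `k` is rainbow with respect to the coloring `c`. -/
def RainbowAP (k : ℕ) (c : ℕ → ℕ) (a d : ℕ) : Prop :=
  ∀ i < k, ∀ j < k, c (a + i * d) = c (a + j * d) → i = j

/-!
Count pairs `(a, d)`. If every color class of `[N]` has at most `m` elements, then `[N]` has at
most `N * m` monochromatic ordered pairs. For fixed `i ≠ j`, the terms `a + i * d` and `a + j * d`
determine `(a, d)`, so at most `N * m` progressions repeat a color at positions `i` and `j`. Hence
at most `k ^ 2 * N * m` progressions fail to be rainbow, while `[N]` contains about `N ^ 2 / k` of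
them, which is more as soon as `N` exceeds a constant times `k ^ 3 * m`.
-/

open Finset

section MonochromaticPairs

variable {α β : Type*} [DecidableEq β]

/-- The ordered pairs of elements of `s` to which `c` gives the same color. The diagonal pairs
`(x, x)` are included. -/
def monochromaticPairs (s : Finset α) (c : α → β) : Finset (α × α) :=
  {p ∈ s ×ˢ s | c p.2 = c p.1}

theorem card_monochromaticPairs_le {s : Finset α} {c : α → β} {m : ℕ}
    (h : ∀ x ∈ s, #{y ∈ s | c y = c x} ≤ m) : #(monochromaticPairs s c) ≤ #s * m :=
  calc #(monochromaticPairs s c) = ∑ x ∈ s, #{y ∈ s | c y = c x} := by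
        simp only [monochromaticPairs, card_filter, sum_product]
    _ ≤ #s * m := sum_le_card_nsmul s _ m h

end MonochromaticPairs

theorem injective_pair_of_terms {i j : ℕ} (hij : i ≠ j) :
    Function.Injective fun p : ℕ × ℕ ↦ (p.1 + i * p.2, p.1 + j * p.2) := by
  rintro ⟨a, d⟩ ⟨a', d'⟩ h
  obtain ⟨hi, hj⟩ : a + i * d = a' + i * d' ∧ a + j * d = a' + j * d' := by simpa using h
  have hd : d = d' := by
    zify at hi hj hij ⊢
    exact mul_left_cancel₀ (sub_ne_zero.2 hij) (by linarith)
  subst hd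
  simpa using hi

section Counting

variable {k : ℕ} {s : Finset ℕ} {P : Finset (ℕ × ℕ)}

theorem card_filter_color_eq_le_card_monochromaticPairs {β : Type*} [DecidableEq β] {c : ℕ → β}
    {i j : ℕ} (hij : i ≠ j) (hi : ∀ p ∈ P, p.1 + i * p.2 ∈ s)
    (hj : ∀ p ∈ P, p.1 + j * p.2 ∈ s) :
    #{p ∈ P | c (p.1 + i * p.2) = c (p.1 + j * p.2)} ≤ #(monochromaticPairs s c) := by
  refine card_le_card_of_injOn _ (fun p hp ↦ ?_) (injective_pair_of_terms hij).injOn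
  obtain ⟨hpP, hcolor⟩ := mem_filter.1 hp
  exact mem_filter.2 ⟨mk_mem_product (hi p hpP) (hj p hpP), hcolor.symm⟩

theorem exists_color_eq_of_not_rainbowAP {c : ℕ → ℕ} {a d : ℕ} (h : ¬RainbowAP k c a d) :
    ∃ q ∈ (range k).offDiag, c (a + q.1 * d) = c (a + q.2 * d) := by
  simp only [RainbowAP, not_forall] at h
  obtain ⟨i, hi, j, hj, hcolor, hij⟩ := h
  exact ⟨(i, j), mem_offDiag.2 ⟨mem_range.2 hi, mem_range.2 hj, hij⟩, hcolor⟩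

theorem exists_rainbowAP_of_mul_card_monochromaticPairs_lt {c : ℕ → ℕ}
    (hP : ∀ p ∈ P, ∀ i < k, p.1 + i * p.2 ∈ s)
    (hcard : #(range k).offDiag * #(monochromaticPairs s c) < #P) :
    ∃ p ∈ P, RainbowAP k c p.1 p.2 := by
  by_contra! hnone
  have hcover : P ⊆ (range k).offDiag.biUnion fun q ↦
      {p ∈ P | c (p.1 + q.1 * p.2) = c (p.1 + q.2 * p.2)} := fun p hp ↦ by
    obtain ⟨q, hq, hcolor⟩ := exists_color_eq_of_not_rainbowAP (hnone p hp)
    exact mem_biUnion.2 ⟨q, hq, mem_filter.2 ⟨hp, hcolor⟩⟩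
  refine hcard.not_ge ((card_le_card hcover).trans (card_biUnion_le_card_mul _ _ _ fun q hq ↦ ?_))
  obtain ⟨hi, hj, hij⟩ := mem_offDiag.1 hq
  exact card_filter_color_eq_le_card_monochromaticPairs hij
    (fun p hp ↦ hP p hp _ (mem_range.1 hi)) (fun p hp ↦ hP p hp _ (mem_range.1 hj))

end Counting

theorem add_mul_mem_Icc_one {N k D a d i : ℕ} (ha : a ∈ Icc 1 (N - (k - 1) * D))
    (hd : d ≤ D) (hi : i < k) : a + i * d ∈ Icc 1 N := by
  have hstep : i * d ≤ (k - 1) * D := Nat.mul_le_mul (Nat.le_sub_one_of_lt hi) hd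
  rw [mem_Icc] at ha ⊢
  omega

theorem lt_two_mul_sub_pred_mul {N k D : ℕ} (hk : 0 < k) (hD : 0 < D) (hN : 2 * (k * D) ≤ N) :
    N < 2 * (N - (k - 1) * D) := by
  have hkD : (k - 1) * D + D = k * D := by
    rw [← Nat.succ_mul, Nat.succ_eq_add_one, Nat.sub_add_cancel hk]
  omega

namespace EquinumerousColoring

variable {t n : ℕ} {c : ℕ → ℕ}

theorem color_mem_Icc (hc : EquinumerousColoring t n c) {x : ℕ} (hx : x ∈ Icc 1 (t * n)) :
    c x ∈ Icc 1 t := by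
  have hcard : #{y ∈ Icc 1 (t * n) | c y ∈ Icc 1 t} = #(Icc 1 (t * n)) :=
    calc #{y ∈ Icc 1 (t * n) | c y ∈ Icc 1 t}
        = ∑ i ∈ Icc 1 t, #{y ∈ Icc 1 (t * n) | c y = i} :=
          (sum_card_fiberwise_eq_card_filter _ _ _).symm
      _ = ∑ _i ∈ Icc 1 t, n :=
          sum_congr rfl fun i hi ↦ hc i (mem_Icc.1 hi).1 (mem_Icc.1 hi).2
      _ = #(Icc 1 (t * n)) := by simp
  exact card_filter_eq_iff.1 hcard x hx

theorem card_color_class (hc : EquinumerousColoring t n c) {x : ℕ} (hx : x ∈ Icc 1 (t * n)) :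
    #{y ∈ Icc 1 (t * n) | c y = c x} = n :=
  have hcx := mem_Icc.1 (hc.color_mem_Icc hx)
  hc (c x) hcx.1 hcx.2

end EquinumerousColoring

theorem rainbow_AP_of_equinumerous_coloring_cubed_general {k m N : ℕ} (hk : 0 < k) (hm : 0 < m)
    (hN : 4 * k ^ 3 * m ≤ N) {c : ℕ → ℕ}
    (hc : ∀ x ∈ Icc 1 N, #{y ∈ Icc 1 N | c y = c x} ≤ m) :
    ∃ a d : ℕ, 1 ≤ a ∧ 1 ≤ d ∧ a + (k - 1) * d ≤ N ∧ RainbowAP k c a d := by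
  -- With differences up to `D`, more than half of `[N]` remains available for first terms.
  set D := 2 * k ^ 2 * m with hD
  set A := N - (k - 1) * D
  have hAD : N < 2 * A := lt_two_mul_sub_pred_mul hk (by positivity) <|
    calc 2 * (k * D) = 4 * k ^ 3 * m := by rw [hD]; ring
      _ ≤ N := hN
  have hterms : ∀ p ∈ Icc 1 A ×ˢ Icc 1 D, ∀ i < k, p.1 + i * p.2 ∈ Icc 1 N := fun p hp i hi ↦
    have hp' := mem_product.1 hp
    add_mul_mem_Icc_one hp'.1 (mem_Icc.1 hp'.2).2 hi
  have hcard : #(range k).offDiag * #(monochromaticPairs (Icc 1 N) c) < #(Icc 1 A ×ˢ Icc 1 D) :=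
    calc #(range k).offDiag * #(monochromaticPairs (Icc 1 N) c)
        ≤ k ^ 2 * (N * m) := by
          gcongr
          · simp [offDiag_card, sq]
          · simpa using card_monochromaticPairs_le hc
      _ = k ^ 2 * m * N := by ring
      _ < k ^ 2 * m * (2 * A) := by gcongr
      _ = #(Icc 1 A ×ˢ Icc 1 D) := by simp [hD]; ring
  obtain ⟨⟨a, d⟩, hp, hrainbow⟩ := exists_rainbowAP_of_mul_card_monochromaticPairs_lt hterms hcard
  have hlast := hterms _ hp (k - 1) (Nat.sub_one_lt_of_lt hk)
  simp only [mem_product, mem_Icc] at hp hlast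
  exact ⟨a, d, hp.1.1, hp.2.1, hlast.2, hrainbow⟩

/-- **T_k = O(k^3).**  There is a constant `C > 0` such that for every `k ≥ 3`
there is a positive integer `t ≤ C * k^3` such that every equinumerous
`t`-coloring of `[t*n]`, for every positive `n`, contains a rainbow
arithmetic progression of length `k`. -/
theorem rainbow_AP_of_equinumerous_coloring_cubed :
    ∃ C : ℝ, 0 < C ∧ ∀ k : ℕ, 3 ≤ k →
      ∃ t : ℕ, 0 < t ∧ (t : ℝ) ≤ C * (k : ℝ) ^ 3 ∧
        ∀ n : ℕ, 0 < n → ∀ c : ℕ → ℕ, EquinumerousColoring t n c →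
          ∃ a d : ℕ, 1 ≤ a ∧ 1 ≤ d ∧ a + (k - 1) * d ≤ t * n ∧
            RainbowAP k c a d := by
  refine ⟨4, by norm_num, fun k hk ↦ ⟨4 * k ^ 3, by positivity, by push_cast; exact le_rfl, ?_⟩⟩
  intro n hn c hc
  exact rainbow_AP_of_equinumerous_coloring_cubed_general (by lia) hn le_rfl
    fun x hx ↦ (hc.card_color_class hx).le
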